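/- arXiv:1809.07699 — 2 statements merged into one kernel-verified Lean document; each statement's English description precedes it below -/
import Mathlib

section
/- Let p be a prime and let G be a finite p-group of maximal class with cd(G) = {1, p, p^b} for some integer b ≥ 2. If |G| = p^n, then cod(G) = {p^i | 0 ≤ i ≤ c} for some integer c with n - b ≤ c ≤ n - 2. -/
open CategoryTheory

/-- The degree of a complex representation: the dimension of the underlying vector space. -/
noncomputable def repDegree {G : Type} [Group G] (V : FDRep ℂ G) : ℕ :=
  Module.finrank ℂ V

/-- The kernel of a representation of `G`, as a subgroup of `G`. -/
noncomputable def repKer {G : Type} [Group G] (V : FDRep ℂ G) : Subgroup G :=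
  MonoidHom.ker (Representation.asGroupHom V.ρ)

/-- The codegree of a character: `|G : ker χ| / χ(1)`. -/
noncomputable def codegree {G : Type} [Group G] (V : FDRep ℂ G) : ℕ :=
  (repKer V).index / repDegree V

/-- `cod(G)`: the set of codegrees of the irreducible complex characters of `G`. -/
def codSet (G : Type) [Group G] : Set ℕ :=
  {m | ∃ V : FDRep ℂ G, Simple V ∧ codegree V = m}

/-- `cd(G)`: the set of degrees of the irreducible complex characters of `G`. -/
def cdSet (G : Type) [Group G] : Set ℕ :=
  {m | ∃ V : FDRep ℂ G, Simple V ∧ repDegree V = m}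

/-- The nilpotency class of `G`: the least `n` with `upperCentralSeries G n = ⊤`. -/
noncomputable def nilClass (G : Type) [Group G] : ℕ :=
  sInf {n | upperCentralSeries G n = ⊤}

open scoped Classical in
/-- The character of `G` induced from the linear character `lam` of the subgroup `H`. -/
noncomputable def indLinearChar {G : Type} [Group G] [Fintype G] (H : Subgroup G)
    (lam : H →* ℂˣ) : G → ℂ :=
  fun g => (∑ x : G, if h : x * g * x⁻¹ ∈ H then ((lam ⟨x * g * x⁻¹, h⟩ : ℂˣ) : ℂ) else 0) /
    (Nat.card H : ℂ)

/-- A finite group is normally monomial if every irreducible complex character is induced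
from a linear character of a normal subgroup. -/
def NormallyMonomial (G : Type) [Group G] [Fintype G] : Prop :=
  ∀ V : FDRep ℂ G, Simple V → ∃ (H : Subgroup G) (lam : H →* ℂˣ),
    H.Normal ∧ FDRep.character V = indLinearChar H lam

/-!
Write `Z i` for the `i`-th term of the upper central series. A group of maximal class of order
`p ^ n` has `|Z i| = p ^ i` for `i ≤ n - 2`, and its normal subgroups of index at least `p ^ 2` are
exactly these `Z i`. Hence the nonlinear irreducible characters have kernels `Z i` with
`i ≤ n - 3`, each of these is such a kernel, and a character of degree `p ^ d` with kernel `Z i`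
has codegree `p ^ (n - i - d)`.

If an irreducible character of a nilpotent group has degree `p`, it is induced from a subgroup `M`
of index `p`, and `M` is abelian modulo the kernel. So every irreducible character with a larger
kernel has degree at most `p`. As the kernels form a chain, `cd(G) = {1, p, p ^ b}` forces a
threshold `a ≥ 1`: the characters with kernel `Z i` have degree `p ^ b` for `i < a` and degree `p`
for `i ≥ a`. The codegrees of the two families fill overlapping or adjacent intervals of exponents.
-/

open scoped commutatorElement

/-! ### Representations of degree `p` -/

theorem exists_common_eigenvector {k V ι : Type*} [Field k] [IsAlgClosed k] [AddCommGroup V]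
    [Module k V] [FiniteDimensional k V] [Nontrivial V] (f : ι → Module.End k V)
    (hf : ∀ i j, Commute (f i) (f j)) :
    ∃ v ≠ 0, ∀ i, ∃ c : k, f i v = c • v := by
  let A := Algebra.adjoin k (Set.range f)
  have : IsMulCommutative A := Algebra.isMulCommutative_adjoin k <| by
    rintro _ ⟨i, rfl⟩ _ ⟨j, rfl⟩
    exact hf i j
  have : IsArtinian A V := isArtinian_of_tower k inferInstance
  obtain ⟨S, hS, -⟩ :=
    (IsAtomic.eq_bot_or_exists_atom_le (⊤ : Submodule A V)).resolve_left top_ne_bot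
  have := isSimpleModule_iff_isAtom.2 hS
  have : FiniteDimensional k S := inferInstanceAs (FiniteDimensional k (S.restrictScalars k))
  have hS1 : Module.finrank k (S.restrictScalars k) = 1 :=
    IsSimpleModule.finrank_eq_one_of_isMulCommutative A S k
  obtain ⟨v, hv, hspan⟩ := finrank_eq_one_iff'.1 hS1
  refine ⟨v, by simpa using hv, fun i ↦ ?_⟩
  have hfv : f i v ∈ S := S.smul_mem (⟨f i, Algebra.subset_adjoin ⟨i, rfl⟩⟩ : A) v.2
  obtain ⟨c, hc⟩ := hspan ⟨f i v, hfv⟩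
  exact ⟨c, (congrArg Subtype.val hc).symm⟩

section
open Representation MonoidAlgebra
variable {k G V : Type*} [Field k] [Group G] [AddCommGroup V] [Module k V]
  (ρ : Representation k G V)

theorem nontrivial_of_isIrreducible [IsIrreducible ρ] : Nontrivial V :=
  IsSimpleModule.nontrivial k[G] ρ.asModule

variable [IsAlgClosed k] [FiniteDimensional k V]

theorem exists_eq_smul_one_of_forall_commute [IsIrreducible ρ] {f : Module.End k V}
    (hf : ∀ g, Commute f (ρ g)) : ∃ c : k, f = c • 1 := by
  obtain ⟨c, hc⟩ := (IsIrreducible.algebraMap_intertwiningMap_bijective_of_isAlgClosed (ρ := ρ)).2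
    ⟨f, fun g ↦ hf g⟩
  exact ⟨c, (congrArg IntertwiningMap.toLinearMap hc).symm⟩

theorem finrank_le_index [IsIrreducible ρ] (M : Subgroup G) [M.FiniteIndex]
    (hM : ∀ a ∈ M, ∀ b ∈ M, Commute (ρ a) (ρ b)) : Module.finrank k V ≤ M.index := by
  have := nontrivial_of_isIrreducible ρ
  obtain ⟨v, hv0, hv⟩ := exists_common_eigenvector (fun m : M ↦ ρ m)
    fun a b ↦ hM a a.2 b b.2
  let e : G ⧸ M → V := fun q ↦ ρ q.out v
  have he : ∀ g, ρ g v ∈ Submodule.span k (Set.range e) := by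
    intro g
    obtain ⟨m, hm⟩ := QuotientGroup.mk_out_eq_mul M g
    obtain ⟨c, hc⟩ := hv m⁻¹
    have hg : g = (g : G ⧸ M).out * ((m⁻¹ : M) : G) := by simp [hm]
    rw [hg, map_mul, Module.End.mul_apply, hc, map_smul]
    exact Submodule.smul_mem _ _ (Submodule.subset_span ⟨_, rfl⟩)
  let S : Subrepresentation ρ := ⟨Submodule.span k (Set.range e), fun g w hw ↦ by
    induction hw using Submodule.span_induction with
    | mem x hx =>
      obtain ⟨q, rfl⟩ := hx
      simpa [e] using he (g * q.out)
    | zero => simp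
    | add x y _ _ hx hy => simpa using add_mem hx hy
    | smul a x _ hx => simpa using Submodule.smul_mem _ a hx⟩
  have hS : S ≠ ⊥ := fun h ↦ hv0 <| by
    have hvS : v ∈ S := show v ∈ Submodule.span k (Set.range e) by simpa using he 1
    rwa [h] at hvS
  have hspan : Submodule.span k (Set.range e) = ⊤ :=
    congrArg Subrepresentation.toSubmodule ((eq_bot_or_eq_top S).resolve_left hS)
  have := Fintype.ofFinite (G ⧸ M)
  have hcard := finrank_range_le_card (R := k) e
  rwa [Set.finrank, hspan, finrank_top, ← Nat.card_eq_fintype_card] at hcard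
end

theorem exists_apply_basis_eq_smul_of_commute {k V ι : Type*} [Field k] [AddCommGroup V]
    [Module k V] {f g : Module.End k V} {μ : ι → k} (hμ : Function.Injective μ)
    (b : Module.Basis ι k V) (hb : ∀ i, f (b i) = μ i • b i) (hfg : Commute f g) (i : ι) :
    ∃ c : k, g (b i) = c • b i := by
  refine ⟨b.repr (g (b i)) i, b.ext_elem fun j ↦ ?_⟩
  rcases eq_or_ne i j with rfl | hij
  · simp
  have hcoord : b.coord j ∘ₗ f = μ j • b.coord j := b.ext fun l ↦ by
    rcases eq_or_ne l j with rfl | hlj <;> simp_all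
  have hfgb : f (g (b i)) = μ i • g (b i) := by
    rw [← Module.End.mul_apply, hfg.eq, Module.End.mul_apply, hb, map_smul]
  have hrepr : μ i * b.repr (g (b i)) j = μ j * b.repr (g (b i)) j := by
    simpa [hfgb] using LinearMap.congr_fun hcoord (g (b i))
  have hzero : b.repr (g (b i)) j = 0 :=
    (mul_eq_mul_right_iff.1 hrepr).resolve_left (hμ.ne hij)
  simp [hzero, hij]

theorem commute_of_commute_of_card_eigenvalues_eq_finrank {k V ι : Type*} [Field k]
    [AddCommGroup V] [Module k V] [FiniteDimensional k V] [Finite ι] {f g h : Module.End k V}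
    {μ : ι → k} (hμ : Function.Injective μ) (hf : ∀ i, f.HasEigenvalue (μ i))
    (hcard : Nat.card ι = Module.finrank k V) (hfg : Commute f g) (hfh : Commute f h) :
    Commute g h := by
  have := Fintype.ofFinite ι
  choose v hv using fun i ↦ (hf i).exists_hasEigenvector
  have hli := Module.End.eigenvectors_linearIndependent' f μ hμ v hv
  let b := Module.Basis.mk hli
    (hli.span_eq_top_of_card_eq_finrank' (Nat.card_eq_fintype_card.symm.trans hcard)).ge
  have hb : ∀ i, f (b i) = μ i • b i := fun i ↦ by simpa [b] using (hv i).apply_eq_smul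
  refine b.ext fun i ↦ ?_
  obtain ⟨c, hc⟩ := exists_apply_basis_eq_smul_of_commute hμ b hb hfg i
  obtain ⟨d, hd⟩ := exists_apply_basis_eq_smul_of_commute hμ b hb hfh i
  simp [hc, hd, smul_comm c d]

theorem exists_noncentral_map_central_map_commutator {G M : Type*} [Group G]
    [Group.IsNilpotent G] [Monoid M] (f : G →* M) (hf : ¬ ∀ a b, Commute (f a) (f b)) :
    ∃ x, (∃ g, ¬ Commute (f x) (f g)) ∧ ∀ g a : G, Commute (f ⁅g, x⁆) (f a) := by
  classical
  obtain ⟨n, hn⟩ := Group.IsNilpotent.nilpotent G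
  push Not at hf
  obtain ⟨a, b, hab⟩ := hf
  have hex : ∃ i, ∃ x ∈ Subgroup.upperCentralSeries G i, ∃ g, ¬ Commute (f x) (f g) :=
    ⟨n, a, hn ▸ Subgroup.mem_top a, b, hab⟩
  obtain ⟨x, hx, g, hxg⟩ := Nat.find_spec hex
  have hmin := fun i ↦ Nat.find_min hex (m := i)
  cases hi : Nat.find hex with
  | zero =>
    rw [hi, Subgroup.upperCentralSeries_zero, Subgroup.mem_bot] at hx
    simp [hx] at hxg
  | succ i =>
    rw [hi, Subgroup.mem_upperCentralSeries_succ_iff] at hx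
    refine ⟨x, ⟨g, hxg⟩, fun h a ↦ ?_⟩
    by_contra hcomm
    refine hmin i (by lia) ⟨⁅h, x⁆, ?_, a, hcomm⟩
    rw [← commutatorElement_inv]
    exact inv_mem (hx h)

section
open Representation
variable {k G V : Type*} [Field k] [Group G] [AddCommGroup V] [Module k V]

theorem exists_monoidHom_conj_eq_smul [Nontrivial V] (ρ : Representation k G V) {x : G}
    (hx : ∀ g, ∃ c : k, ρ (g * x * g⁻¹) = c • ρ x) :
    ∃ χ : G →* kˣ, ∀ g, ρ (g * x * g⁻¹) = (χ g : k) • ρ x := by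
  choose c hc using hx
  have hρx : ρ x ≠ 0 := (((Group.isUnit x).map ρ).ne_zero)
  have hinj := smul_left_injective k hρx
  let χ : G →* k :=
    { toFun := c
      map_one' := hinj (by simp [← hc])
      map_mul' := fun g h ↦ hinj <| by
        have hconj : g * h * x * (g * h)⁻¹ = g * (h * x * h⁻¹) * g⁻¹ := by group
        have hg : ρ g * ρ x * ρ g⁻¹ = c g • ρ x := by rw [← map_mul, ← map_mul, hc]
        simp only [← hc, hconj]
        rw [map_mul, map_mul, hc h, mul_smul_comm, smul_mul_assoc, hg, smul_smul, mul_comm] }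
  exact ⟨χ.toHomUnits, hc⟩

theorem pow_finrank_eq_one_of_conj_eq_smul (ρ : Representation k G V) {x g : G} {c : k}
    (hc : ρ (g * x * g⁻¹) = c • ρ x) : c ^ Module.finrank k V = 1 := by
  have hconj : LinearMap.det (ρ (g * x * g⁻¹)) = LinearMap.det (ρ x) := by
    rw [map_mul, map_mul, map_mul, map_mul, mul_right_comm, ← map_mul LinearMap.det, ← map_mul ρ,
      mul_inv_cancel, map_one, map_one, one_mul]
  have hunit : IsUnit (LinearMap.det (ρ x)) := ((Group.isUnit x).map ρ).map LinearMap.det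
  rw [hc, LinearMap.det_smul] at hconj
  exact (mul_eq_right₀ hunit.ne_zero).1 hconj

theorem index_ker_eq_of_conj_eq_smul {p : ℕ} (hp : p.Prime) (ρ : Representation k G V)
    (hdim : Module.finrank k V = p) {x g₀ : G} (χ : G →* kˣ)
    (hχ : ∀ g, ρ (g * x * g⁻¹) = (χ g : k) • ρ x) (hg₀ : χ g₀ ≠ 1) : χ.ker.index = p := by
  have : Fact p.Prime := ⟨hp⟩
  have : NeZero p := ⟨hp.ne_zero⟩
  have hpow : ∀ g, χ g ^ p = 1 := fun g ↦ Units.ext <| by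
    simpa [hdim] using pow_finrank_eq_one_of_conj_eq_smul ρ (hχ g)
  have hle : χ.range ≤ rootsOfUnity p k := by
    rintro _ ⟨g, rfl⟩
    exact hpow g
  have : Finite χ.range := Finite.of_injective _ (Subgroup.inclusion_injective hle)
  rw [Subgroup.index_ker]
  apply le_antisymm
  · exact (Subgroup.card_le_of_le hle).trans (card_rootsOfUnity k p)
  · rw [← orderOf_eq_prime (hpow g₀) hg₀, ← Nat.card_zpowers]
    exact Subgroup.card_le_of_le (Subgroup.zpowers_le.2 ⟨g₀, rfl⟩)

theorem mul_eq_smul_mul_of_conj_eq_smul (ρ : Representation k G V) {x g : G} {c : k}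
    (hc : ρ (g * x * g⁻¹) = c • ρ x) : ρ g * ρ x = c • (ρ x * ρ g) := by
  rw [← smul_mul_assoc, ← hc, ← map_mul, ← map_mul, inv_mul_cancel_right]

variable [FiniteDimensional k V] [IsAlgClosed k]

/- `ρ g` sends a `μ`-eigenvector of `ρ x` to a `(χ g)⁻¹ * μ`-eigenvector, so the spectrum of `ρ x`
is simple; `χ.ker` commutes with `ρ x` and is therefore simultaneously diagonalised. -/
theorem commute_of_mem_ker_of_conj_eq_smul [Nontrivial V] (ρ : Representation k G V) {x : G}
    (χ : G →* kˣ) (hχ : ∀ g, ρ (g * x * g⁻¹) = (χ g : k) • ρ x)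
    (hindex : χ.ker.index = Module.finrank k V)
    {a b : G} (ha : a ∈ χ.ker) (hb : b ∈ χ.ker) : Commute (ρ a) (ρ b) := by
  have hcard : Nat.card χ.range = Module.finrank k V := (Subgroup.index_ker χ).symm.trans hindex
  have : Finite χ.range := Nat.finite_of_card_ne_zero (hcard ▸ Module.finrank_pos.ne')
  have hmul : ∀ g, ρ g * ρ x = (χ g : k) • (ρ x * ρ g) := fun g ↦
    mul_eq_smul_mul_of_conj_eq_smul ρ (hχ g)
  have hcomm : ∀ g ∈ χ.ker, Commute (ρ x) (ρ g) := fun g hg ↦ by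
    rw [commute_iff_eq, hmul, MonoidHom.mem_ker.1 hg, Units.val_one, one_smul]
  obtain ⟨μ, hμ⟩ := Module.End.exists_eigenvalue (ρ x)
  obtain ⟨v, hv⟩ := hμ.exists_hasEigenvector
  have hμ0 : μ ≠ 0 := by
    rintro rfl
    apply hv.2
    simpa [hv.apply_eq_smul] using (ρ.inv_self_apply x v).symm
  have heigen : ∀ u : χ.range, Module.End.HasEigenvalue (ρ x) (((u : kˣ)⁻¹ : kˣ) * μ) := by
    rintro ⟨_, g, rfl⟩
    refine Module.End.hasEigenvalue_of_hasEigenvector (x := ρ g v)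
      (Module.End.hasEigenvector_iff.2 ⟨Module.End.mem_eigenspace_iff.2 ?_, fun h ↦ hv.2 ?_⟩)
    · have hgv : μ • ρ g v = (χ g : k) • ρ x (ρ g v) := by
        simpa [hv.apply_eq_smul] using LinearMap.congr_fun (hmul g) v
      rw [mul_smul, hgv, smul_smul, Units.inv_mul, one_smul]
    · simpa using congrArg (ρ g⁻¹) h
  refine commute_of_commute_of_card_eigenvalues_eq_finrank (fun u w huw ↦ ?_) heigen
    hcard (hcomm a ha) (hcomm b hb)
  exact Subtype.ext (inv_injective (Units.ext (mul_right_cancel₀ hμ0 huw)))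

theorem exists_subgroup_index_eq_of_finrank_prime [Group.IsNilpotent G] {p : ℕ}
    (hp : p.Prime) (ρ : Representation k G V) [IsIrreducible ρ] (hdim : Module.finrank k V = p) :
    ∃ M : Subgroup G, M.index = p ∧ ∀ a ∈ M, ∀ b ∈ M, Commute (ρ a) (ρ b) := by
  have : Nontrivial V := Module.finrank_pos_iff.1 (hdim ▸ hp.pos)
  have hnc : ¬ ∀ a b, Commute (ρ a) (ρ b) := fun h ↦ hp.one_lt.not_ge <| by
    simpa [hdim] using finrank_le_index ρ ⊤ fun a _ b _ ↦ h a b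
  obtain ⟨x, ⟨g₀, hg₀⟩, hx⟩ := exists_noncentral_map_central_map_commutator ρ hnc
  obtain ⟨χ, hχ⟩ := exists_monoidHom_conj_eq_smul ρ (x := x) fun g ↦ by
    obtain ⟨c, hc⟩ := exists_eq_smul_one_of_forall_commute ρ (hx g)
    have hconj : g * x * g⁻¹ = ⁅g, x⁆ * x := by simp [commutatorElement_def]
    exact ⟨c, by rw [hconj, map_mul, hc, smul_mul_assoc, one_mul]⟩
  have hχ₀ : χ g₀ ≠ 1 := fun h ↦ hg₀ <| by
    rw [commute_iff_eq, mul_eq_smul_mul_of_conj_eq_smul ρ (hχ g₀), h, Units.val_one, one_smul]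
  have hindex := index_ker_eq_of_conj_eq_smul hp ρ hdim χ hχ hχ₀
  exact ⟨χ.ker, hindex, fun a ha b hb ↦
    commute_of_mem_ker_of_conj_eq_smul ρ χ hχ (hindex.trans hdim.symm) ha hb⟩

theorem finrank_le_of_ker_le [Group.IsNilpotent G] {p : ℕ} (hp : p.Prime)
    {W : Type*} [AddCommGroup W] [Module k W] [FiniteDimensional k W]
    (ρ : Representation k G V) [IsIrreducible ρ] (σ : Representation k G W) [IsIrreducible σ]
    (hdim : Module.finrank k V = p) (hker : ρ.ker ≤ σ.ker) :
    Module.finrank k W ≤ p := by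
  obtain ⟨M, hM, hcomm⟩ := exists_subgroup_index_eq_of_finrank_prime hp ρ hdim
  have : M.FiniteIndex := ⟨hM ▸ hp.ne_zero⟩
  exact hM ▸ finrank_le_index σ M fun a ha b hb ↦ by
    have hρ : ρ (a * b) = ρ (b * a) := by rw [map_mul, map_mul, (hcomm a ha b hb).eq]
    rw [commute_iff_eq, ← map_mul, ← map_mul]
    exact MonoidHom.eq_iff σ |>.2 (hker ((MonoidHom.eq_iff ρ).1 hρ))
end

/-! ### Irreducible characters with a prescribed kernel -/

theorem repKer_eq_ker {G : Type} [Group G] (V : FDRep ℂ G) : repKer V = V.ρ.ker := by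
  ext a
  rw [repKer, MonoidHom.mem_ker, MonoidHom.mem_ker, Units.ext_iff,
    Representation.asGroupHom_apply, Units.val_one]

theorem mem_repKer {G : Type} [Group G] {V : FDRep ℂ G} {a : G} : a ∈ repKer V ↔ V.ρ a = 1 := by
  rw [repKer_eq_ker, MonoidHom.mem_ker]

instance {G : Type} [Group G] (V : FDRep ℂ G) : (repKer V).Normal := by
  unfold repKer; infer_instance

section
open Representation
variable {k G V : Type*} [Field k] [Group G] [AddCommGroup V] [Module k V]

theorem isIrreducible_toRepresentation_of_isAtom {ρ : Representation k G V}
    {S : Subrepresentation ρ} (hS : IsAtom S) : IsIrreducible S.toRepresentation where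
  exists_pair_ne := ⟨⊥, ⊤, fun h ↦ hS.1 <| by
    refine Subrepresentation.toSubmodule_injective ((Submodule.eq_bot_iff _).2 fun v hv ↦ ?_)
    have hv' : (⟨v, hv⟩ : S.toSubmodule) ∈ (⊤ : Subrepresentation S.toRepresentation) := trivial
    rw [← h] at hv'
    exact congrArg Subtype.val (show (⟨v, hv⟩ : S.toSubmodule) = 0 from hv')⟩
  eq_bot_or_eq_top T := by
    let T' : Subrepresentation ρ := ⟨T.toSubmodule.map S.toSubmodule.subtype, by
      rintro g _ ⟨t, ht, rfl⟩
      exact ⟨_, T.apply_mem_toSubmodule g ht, rfl⟩⟩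
    have hinj := Submodule.map_injective_of_injective S.toSubmodule.injective_subtype
    have hT' : T' ≤ S := Submodule.map_subtype_le S.toSubmodule T.toSubmodule
    refine (hS.le_iff.1 hT').imp (fun h ↦ ?_) fun h ↦ ?_
    · refine Subrepresentation.toSubmodule_injective (hinj ?_)
      exact (congrArg Subrepresentation.toSubmodule h).trans (Submodule.map_bot _).symm
    · refine Subrepresentation.toSubmodule_injective (hinj ?_)
      exact (congrArg Subrepresentation.toSubmodule h).trans
        (Submodule.map_subtype_top S.toSubmodule).symm

theorem exists_isIrreducible_toRepresentation_ne_one [FiniteDimensional k V]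
    (ρ : Representation k G V) [IsSemisimpleRepresentation ρ] {g : G} (hg : ρ g ≠ 1) :
    ∃ S : Subrepresentation ρ, IsIrreducible S.toRepresentation ∧ S.toRepresentation g ≠ 1 := by
  by_contra! htriv
  -- `F` is the largest subrepresentation on which `g` acts trivially
  let F : Subrepresentation ρ := ⟨⨅ h, LinearMap.eqLocus (ρ (g * h)) (ρ h), fun a v hv ↦ by
    simp only [Submodule.mem_iInf, LinearMap.mem_eqLocus] at hv ⊢
    intro h
    simpa [mul_assoc] using hv (h * a)⟩
  have hF : F ≠ ⊤ := fun h ↦ hg <| LinearMap.ext fun v ↦ by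
    have hv : v ∈ F.toSubmodule := h ▸ Submodule.mem_top
    simpa [F] using (Submodule.mem_iInf _).1 hv 1
  have : WellFoundedLT (Subrepresentation ρ) :=
    (show StrictMono (Subrepresentation.toSubmodule (ρ := ρ)) from fun _ _ h ↦ h).wellFoundedLT
  obtain ⟨C, hC⟩ := exists_isCompl F
  have hC0 : C ≠ ⊥ := fun h ↦ hF (by simpa [h] using hC.sup_eq_top)
  obtain ⟨S, hS, hSC⟩ := (IsAtomic.eq_bot_or_exists_atom_le C).resolve_left hC0
  have hSF : S ≤ F := fun v hv ↦ (Submodule.mem_iInf _).2 fun h ↦ by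
    have hgS := htriv S (isIrreducible_toRepresentation_of_isAtom hS)
    have hghv : ρ g (ρ h v) = ρ h v :=
      congrArg Subtype.val (LinearMap.congr_fun hgS ⟨ρ h v, S.apply_mem_toSubmodule h hv⟩)
    simpa using hghv
  exact hS.1 (le_bot_iff.1 (hC.inf_eq_bot ▸ le_inf hSF hSC))

theorem leftRegular_mk_eq_one_iff (N : Subgroup G) [N.Normal] {g : G} :
    leftRegular k (G ⧸ N) g = 1 ↔ g ∈ N := by
  rw [← QuotientGroup.eq_one_iff]
  refine ⟨fun h ↦ ?_, fun h ↦ by rw [h, map_one]⟩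
  have := LinearMap.congr_fun h (.single 1 1)
  simpa [MonoidAlgebra.single_left_inj] using this

theorem isIrreducible_of_finrank_eq_one (ρ : Representation k G V)
    (hdim : Module.finrank k V = 1) : IsIrreducible ρ := by
  have := isSimpleModule_iff_finrank_eq_one.2 hdim
  have := Module.nontrivial_of_finrank_pos (hdim ▸ one_pos)
  exact
  { exists_pair_ne := ⟨⊥, ⊤, fun h ↦ bot_ne_top (congrArg Subrepresentation.toSubmodule h)⟩
    eq_bot_or_eq_top S := (eq_bot_or_eq_top S.toSubmodule).imp
      (fun h ↦ Subrepresentation.toSubmodule_injective h)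
      fun h ↦ Subrepresentation.toSubmodule_injective h }

theorem injective_det_of_finrank_eq_one (hdim : Module.finrank k V = 1) :
    Function.Injective (LinearMap.det : Module.End k V →* k) := fun f g hfg ↦ by
  obtain ⟨a, rfl, -⟩ := f.existsUnique_eq_smul_id_of_finrank_eq_one hdim
  obtain ⟨b, rfl, -⟩ := g.existsUnique_eq_smul_id_of_finrank_eq_one hdim
  simp_all [LinearMap.det_smul]

theorem isCyclic_quotient_ker_asGroupHom [Finite G] (ρ : Representation k G V)
    (hdim : Module.finrank k V = 1) : IsCyclic (G ⧸ (asGroupHom ρ).ker) := by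
  have hinj : Function.Injective ((LinearMap.det.comp (Units.coeHom (Module.End k V))).comp
      (QuotientGroup.kerLift (asGroupHom ρ))) :=
    ((injective_det_of_finrank_eq_one hdim).comp Units.val_injective).comp
      (QuotientGroup.kerLift_injective _)
  exact isCyclic_of_injective_ringHom _ hinj
end

section
universe u
open Representation

theorem isIrreducible_of_simple {k G : Type u} [Field k] [Group G] (V : FDRep k G) [Simple V] :
    IsIrreducible V.ρ where
  exists_pair_ne := ⟨⊥, ⊤, fun h ↦ id_nonzero V <| by
    ext v
    have hv : v ∈ (⊤ : Subrepresentation V.ρ) := trivial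
    rw [← h] at hv
    exact hv⟩
  eq_bot_or_eq_top S := by
    let f : FDRep.of S.toRepresentation ⟶ V :=
      ⟨InducedCategory.homMk (ModuleCat.ofHom S.toSubmodule.subtype), fun g ↦ rfl⟩
    have : Mono f := ⟨fun a b hab ↦ by
      ext u
      exact congrArg (fun e ↦ e.hom.hom.hom u) hab⟩
    by_cases hf : f = 0
    · refine .inl (Subrepresentation.toSubmodule_injective ((Submodule.eq_bot_iff _).2 ?_))
      exact fun v hv ↦ congrArg (fun e ↦ e.hom.hom.hom ⟨v, hv⟩) hf
    · refine .inr (Subrepresentation.toSubmodule_injective (Submodule.eq_top_iff'.2 fun v ↦ ?_))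
      have := isIso_of_mono_of_nonzero hf
      have hv : (((inv f).hom.hom.hom v : S.toSubmodule) : V) = v :=
        congrArg (fun e ↦ e.hom.hom.hom v) (IsIso.inv_hom_id f)
      exact hv ▸ ((inv f).hom.hom.hom v : S.toSubmodule).2

theorem simple_of_isIrreducible {k G : Type u} [Field k] [IsAlgClosed k] [Group G] [Finite G]
    [NeZero (Nat.card G : k)] (V : FDRep k G) [IsIrreducible V.ρ] : Simple V := by
  rw [FDRep.simple_iff_end_is_rank_one, ← (FDRep.forget₂HomLinearEquiv V V).finrank_eq]
  rw [(Rep.homLinearEquiv _ _).finrank_eq]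
  exact IsIrreducible.finrank_intertwiningMap_self V.ρ
end

section
open Representation

theorem exists_simple_le_repKer {G : Type} [Group G] [Finite G] (N : Subgroup G) [N.Normal]
    {g : G} (hg : g ∉ N) :
    ∃ V : FDRep ℂ G, Simple V ∧ N ≤ repKer V ∧ g ∉ repKer V := by
  have : NeZero (Nat.card G : ℂ) := ⟨Nat.cast_ne_zero.2 Nat.card_pos.ne'⟩
  let ρ : Representation ℂ G (MonoidAlgebra ℂ (G ⧸ N)) :=
    (leftRegular ℂ (G ⧸ N)).comp (QuotientGroup.mk' N)
  have hρ : ∀ a, ρ a = 1 ↔ a ∈ N := fun a ↦ leftRegular_mk_eq_one_iff N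
  have : IsSemisimpleRepresentation ρ := inferInstance
  obtain ⟨S, hS, hgS⟩ := exists_isIrreducible_toRepresentation_ne_one ρ (mt (hρ g).1 hg)
  have hρS : ∀ a, a ∈ repKer (FDRep.of S.toRepresentation) ↔ S.toRepresentation a = 1 :=
    fun a ↦ mem_repKer
  have : IsIrreducible (FDRep.of S.toRepresentation).ρ := hS
  refine ⟨FDRep.of S.toRepresentation, simple_of_isIrreducible _, fun a ha ↦ (hρS a).2 ?_,
    mt (hρS g).1 hgS⟩
  exact LinearMap.ext fun v ↦ Subtype.ext (LinearMap.congr_fun ((hρ a).2 ha) v)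
end

/-! ### The upper central series of a group of maximal class -/

section
variable {G : Type*} [Group G]

theorem upperCentralSeries_succ_eq_top_of_isCyclic {N : Subgroup G} [N.Normal]
    [IsCyclic (G ⧸ N)] {i : ℕ} (hN : N ≤ Subgroup.upperCentralSeries G (i + 1)) :
    Subgroup.upperCentralSeries G (i + 1) = ⊤ := by
  let f : G ⧸ Subgroup.upperCentralSeries G i →* G ⧸ Subgroup.upperCentralSeries G (i + 1) :=
    QuotientGroup.map _ _ (MonoidHom.id G) (Subgroup.upperCentralSeries_mono G i.le_succ)
  let f' : G ⧸ N →* G ⧸ Subgroup.upperCentralSeries G (i + 1) :=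
    QuotientGroup.map _ _ (MonoidHom.id G) hN
  have : IsCyclic (G ⧸ Subgroup.upperCentralSeries G (i + 1)) :=
    isCyclic_of_surjective f'
      (QuotientGroup.map_surjective_of_surjective _ _ _ QuotientGroup.mk_surjective hN)
  have hcomm : ∀ x y : G, (x * y : G ⧸ Subgroup.upperCentralSeries G i) = y * x ↔
      ⁅x, y⁆ ∈ Subgroup.upperCentralSeries G i := fun x y ↦ by
    rw [← QuotientGroup.eq_one_iff, commutatorElement_def, ← div_eq_one]
    simp [div_eq_mul_inv, mul_assoc]
  have hker : f.ker ≤ Subgroup.center _ := fun q hq ↦ by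
    induction q using QuotientGroup.induction_on with | H x
    have hx : x ∈ Subgroup.upperCentralSeries G (i + 1) := (QuotientGroup.eq_one_iff x).1 hq
    refine Subgroup.mem_center_iff.2 fun r ↦ ?_
    induction r using QuotientGroup.induction_on with | H y
    exact ((hcomm x y).2 (Subgroup.mem_upperCentralSeries_succ_iff.1 hx y)).symm
  have := f.isMulCommutative_of_isCyclic_of_ker_le_center hker
  exact eq_top_iff.2 fun x _ ↦ Subgroup.mem_upperCentralSeries_succ_iff.2 fun y ↦
    (hcomm x y).1 (mul_comm' _ _)

theorem le_upperCentralSeries_of_inf_succ_le [Group.IsNilpotent G] {N : Subgroup G}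
    [N.Normal] {i : ℕ}
    (h : N ⊓ Subgroup.upperCentralSeries G (i + 1) ≤ Subgroup.upperCentralSeries G i) :
    N ≤ Subgroup.upperCentralSeries G i := by
  have hinf : ∀ j, N ⊓ Subgroup.upperCentralSeries G j ≤ Subgroup.upperCentralSeries G i := by
    intro j
    induction j with
    | zero => simp
    | succ j ih =>
      rintro x ⟨hxN, hx⟩
      refine h ⟨hxN, Subgroup.mem_upperCentralSeries_succ_iff.2 fun y ↦
        ih ⟨?_, Subgroup.mem_upperCentralSeries_succ_iff.1 hx y⟩⟩
      exact Subgroup.commutator_le_left N ⊤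
        (Subgroup.commutator_mem_commutator hxN (Subgroup.mem_top y))
  simpa [Subgroup.upperCentralSeries_nilpotencyClass] using hinf (Group.nilpotencyClass G)

variable {p : ℕ} [Fact p.Prime]

theorem prime_mul_card_le_of_lt [Finite G] (hG : IsPGroup p G) {H K : Subgroup G} (h : H < K) :
    p * Nat.card H ≤ Nat.card K := by
  obtain ⟨n, hn⟩ := (hG.to_subgroup K).index (H.subgroupOf K)
  have hn0 : n ≠ 0 := fun hn0 ↦ h.not_ge <|
    Subgroup.relIndex_eq_one.1 (by rw [Subgroup.relIndex, hn, hn0, pow_zero])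
  have hmul := Subgroup.relIndex_mul_relIndex ⊥ H K bot_le h.le
  rw [Subgroup.relIndex_bot_left, Subgroup.relIndex_bot_left, Subgroup.relIndex, hn] at hmul
  rw [← hmul, mul_comm]
  exact Nat.mul_le_mul_left _ (Nat.le_self_pow hn0 p)

theorem le_upperCentralSeries_or_pow_mul_card_inf_le [Finite G] (hG : IsPGroup p G)
    (N : Subgroup G) [N.Normal] (i j : ℕ) :
    N ≤ Subgroup.upperCentralSeries G (i + j) ∨
      p ^ j * Nat.card ↥(N ⊓ Subgroup.upperCentralSeries G i) ≤
        Nat.card ↥(N ⊓ Subgroup.upperCentralSeries G (i + j)) := by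
  have := hG.isNilpotent
  induction j with
  | zero => simp
  | succ j ih =>
    by_cases hN : N ≤ Subgroup.upperCentralSeries G (i + j)
    · exact .inl (hN.trans (Subgroup.upperCentralSeries_mono G (by lia)))
    have hmono : N ⊓ Subgroup.upperCentralSeries G (i + j) ≤
        N ⊓ Subgroup.upperCentralSeries G (i + (j + 1)) :=
      inf_le_inf_left N (Subgroup.upperCentralSeries_mono G (by lia))
    have hlt := hmono.lt_of_ne fun h ↦
      hN (le_upperCentralSeries_of_inf_succ_le (h.ge.trans inf_le_right))
    right
    calc p ^ (j + 1) * Nat.card ↥(N ⊓ Subgroup.upperCentralSeries G i)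
        = p * (p ^ j * Nat.card ↥(N ⊓ Subgroup.upperCentralSeries G i)) := by ring
      _ ≤ p * Nat.card ↥(N ⊓ Subgroup.upperCentralSeries G (i + j)) :=
          Nat.mul_le_mul_left _ (ih.resolve_left hN)
      _ ≤ _ := prime_mul_card_le_of_lt hG hlt

theorem le_upperCentralSeries_or_pow_le_card_inf [Finite G] (hG : IsPGroup p G)
    (N : Subgroup G) [N.Normal] (i : ℕ) :
    N ≤ Subgroup.upperCentralSeries G i ∨
      p ^ i ≤ Nat.card ↥(N ⊓ Subgroup.upperCentralSeries G i) := by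
  simpa using le_upperCentralSeries_or_pow_mul_card_inf_le hG N 0 i

theorem le_upperCentralSeries_of_card_le_pow [Finite G] (hG : IsPGroup p G)
    {N : Subgroup G} [N.Normal] {i : ℕ} (hN : Nat.card N ≤ p ^ i) :
    N ≤ Subgroup.upperCentralSeries G i := by
  refine (le_upperCentralSeries_or_pow_le_card_inf hG N i).elim id fun h ↦ ?_
  exact inf_eq_left.1 (Subgroup.eq_of_le_of_card_ge inf_le_left (hN.trans h))
end

/-- A nonabelian `p`-group of maximal class, of order `p ^ (k + 3)`. The exponent is
written `k + 3` so that the proper terms `Subgroup.upperCentralSeries G i`, `i ≤ k + 1`, are indexed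
without truncated subtraction. -/
structure IsMaximalClass (p k : ℕ) (G : Type*) [Group G] : Prop where
  card_eq : Nat.card G = p ^ (k + 3)
  nilpotencyClass_eq : Group.nilpotencyClass G = k + 2

namespace IsMaximalClass
variable {p k : ℕ} {G : Type*} [Group G]

theorem isPGroup (h : IsMaximalClass p k G) : IsPGroup p G := .of_card h.card_eq

variable [hp : Fact p.Prime]

include hp in
theorem finite (h : IsMaximalClass p k G) : Finite G :=
  Nat.finite_of_card_ne_zero (h.card_eq ▸ pow_ne_zero _ hp.out.ne_zero)

theorem upperCentralSeries_eq_top (h : IsMaximalClass p k G) :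
    Subgroup.upperCentralSeries G (k + 2) = ⊤ := by
  have := h.finite
  have := h.isPGroup.isNilpotent
  exact Subgroup.upperCentralSeries_eq_top_iff_nilpotencyClass_le.2 h.nilpotencyClass_eq.le

theorem upperCentralSeries_ne_top (h : IsMaximalClass p k G) {i : ℕ} (hi : i ≤ k + 1) :
    Subgroup.upperCentralSeries G i ≠ ⊤ := by
  have := h.finite
  have := h.isPGroup.isNilpotent
  rw [Ne, Subgroup.upperCentralSeries_eq_top_iff_nilpotencyClass_le, h.nilpotencyClass_eq]
  lia

theorem not_le_upperCentralSeries_of_isCyclic (h : IsMaximalClass p k G) (N : Subgroup G)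
    [N.Normal] [IsCyclic (G ⧸ N)] :
    ¬ N ≤ Subgroup.upperCentralSeries G (k + 1) := fun hN ↦
  h.upperCentralSeries_ne_top le_rfl (upperCentralSeries_succ_eq_top_of_isCyclic hN)

theorem card_le_of_index_eq_pow (h : IsMaximalClass p k G) {N : Subgroup G} {d : ℕ}
    (hd : N.index = p ^ d) (hd2 : 2 ≤ d) : Nat.card N ≤ p ^ (k + 1) := by
  refine Nat.le_of_mul_le_mul_right ?_ (pow_pos hp.out.pos 2)
  calc Nat.card N * p ^ 2 ≤ Nat.card N * p ^ d :=
        Nat.mul_le_mul_left _ (Nat.pow_le_pow_right hp.out.pos hd2)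
    _ = p ^ (k + 1) * p ^ 2 := by rw [← hd, N.card_mul_index, h.card_eq, ← pow_add]

theorem card_upperCentralSeries_le (h : IsMaximalClass p k G) :
    Nat.card (Subgroup.upperCentralSeries G (k + 1)) ≤ p ^ (k + 1) := by
  have := h.finite
  obtain ⟨d, hd⟩ := h.isPGroup.index (Subgroup.upperCentralSeries G (k + 1))
  have hd0 : d ≠ 0 := fun hd0 ↦ h.upperCentralSeries_ne_top le_rfl <|
    Subgroup.index_eq_one.1 (by rw [hd, hd0, pow_zero])
  have hd1 : d ≠ 1 := fun hd1 ↦ by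
    have : IsCyclic (G ⧸ Subgroup.upperCentralSeries G (k + 1)) :=
      isCyclic_of_prime_card (p := p) (by rw [← Subgroup.index, hd, hd1, pow_one])
    exact h.not_le_upperCentralSeries_of_isCyclic _ le_rfl
  exact h.card_le_of_index_eq_pow hd (by lia)

theorem card_upperCentralSeries (h : IsMaximalClass p k G) {i : ℕ} (hi : i ≤ k + 1) :
    Nat.card (Subgroup.upperCentralSeries G i) = p ^ i := by
  have := h.finite
  obtain ⟨j, hj⟩ := Nat.exists_eq_add_of_le hi
  have hle := le_upperCentralSeries_or_pow_le_card_inf h.isPGroup ⊤ i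
  have hge := le_upperCentralSeries_or_pow_mul_card_inf_le h.isPGroup ⊤ i j
  simp only [top_le_iff, top_inf_eq, h.upperCentralSeries_ne_top hi,
    h.upperCentralSeries_ne_top hj.ge, false_or] at hle hge
  refine le_antisymm (Nat.le_of_mul_le_mul_left ?_ (pow_pos hp.out.pos j)) hle
  calc _ ≤ _ := hge
    _ = Nat.card (Subgroup.upperCentralSeries G (k + 1)) := by rw [hj]
    _ ≤ p ^ (k + 1) := h.card_upperCentralSeries_le
    _ = p ^ j * p ^ i := by rw [hj, add_comm, pow_add]

theorem upperCentralSeries_le (h : IsMaximalClass p k G) {N : Subgroup G} [N.Normal] {i : ℕ}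
    (hi : i ≤ k + 1) (hN : p ^ i ≤ Nat.card N) : Subgroup.upperCentralSeries G i ≤ N := by
  have := h.finite
  have hcard := h.card_upperCentralSeries hi
  rcases le_upperCentralSeries_or_pow_le_card_inf h.isPGroup N i with hle | hle
  · exact (Subgroup.eq_of_le_of_card_ge hle (hcard.trans_le hN)).ge
  · exact inf_eq_right.1 (Subgroup.eq_of_le_of_card_ge inf_le_right (hcard.trans_le hle))

theorem eq_upperCentralSeries_or_le (h : IsMaximalClass p k G) (N : Subgroup G) [N.Normal] :
    (∃ i ≤ k, N = Subgroup.upperCentralSeries G i) ∨ Subgroup.upperCentralSeries G (k + 1) ≤ N := by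
  have := h.finite
  obtain ⟨e, he⟩ := IsPGroup.iff_card.1 (h.isPGroup.to_subgroup N)
  rcases le_or_gt e k with hek | hek
  · exact .inl ⟨e, hek, (le_upperCentralSeries_of_card_le_pow h.isPGroup he.le).antisymm
      (h.upperCentralSeries_le (by lia) he.ge)⟩
  · exact .inr (h.upperCentralSeries_le le_rfl (he ▸ Nat.pow_le_pow_right hp.out.pos hek))

end IsMaximalClass

/-! ### Codegrees in groups of maximal class -/

section
variable {G : Type} [Group G]

theorem repDegree_eq_one_of_forall_commute (V : FDRep ℂ G) [Simple V]
    (hV : ∀ a b, Commute (V.ρ a) (V.ρ b)) : repDegree V = 1 := by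
  have := isIrreducible_of_simple V
  have := nontrivial_of_isIrreducible V.ρ
  refine le_antisymm ?_ Module.finrank_pos
  exact (finrank_le_index V.ρ ⊤ fun a _ b _ ↦ hV a b).trans_eq Subgroup.index_top

theorem repDegree_le_index_repKer [Finite G] (V : FDRep ℂ G) [Simple V] :
    repDegree V ≤ (repKer V).index := by
  have := isIrreducible_of_simple V
  refine finrank_le_index V.ρ (repKer V) fun a ha b hb ↦ ?_
  rw [mem_repKer.1 ha, mem_repKer.1 hb]

theorem repDegree_le_of_repKer_le [Group.IsNilpotent G] {p : ℕ} (hp : p.Prime)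
    {V W : FDRep ℂ G} [Simple V] [Simple W] (hV : repDegree V = p) (hVW : repKer V ≤ repKer W) :
    repDegree W ≤ p := by
  have := isIrreducible_of_simple V
  have := isIrreducible_of_simple W
  rw [repKer_eq_ker, repKer_eq_ker] at hVW
  exact finrank_le_of_ker_le hp V.ρ W.ρ hV hVW

theorem one_mem_codSet [Finite G] : 1 ∈ codSet G := by
  have : NeZero (Nat.card G : ℂ) := ⟨Nat.cast_ne_zero.2 Nat.card_pos.ne'⟩
  let V := FDRep.of (Representation.trivial ℂ G ℂ)
  have hdim : repDegree V = 1 := Module.finrank_self ℂ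
  have hker : repKer V = ⊤ := eq_top_iff.2 fun a _ ↦ mem_repKer.2 rfl
  have := isIrreducible_of_finrank_eq_one V.ρ hdim
  exact ⟨V, simple_of_isIrreducible V, by rw [codegree, hker, Subgroup.index_top, hdim]⟩

theorem nilClass_eq_nilpotencyClass [Group.IsNilpotent G] :
    nilClass G = Group.nilpotencyClass G := by
  have hset : {n | Subgroup.upperCentralSeries G n = ⊤} = Set.Ici (Group.nilpotencyClass G) :=
    Set.ext fun _ ↦ Subgroup.upperCentralSeries_eq_top_iff_nilpotencyClass_le
  exact (congrArg sInf hset).trans csInf_Ici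
end

namespace IsMaximalClass
variable {p k : ℕ} {G : Type} [Group G] [hp : Fact p.Prime]

theorem index_dvd_of_isCyclic (h : IsMaximalClass p k G) (N : Subgroup G) [N.Normal]
    [IsCyclic (G ⧸ N)] : N.index ∣ p := by
  have := h.finite
  obtain ⟨d, hd⟩ := h.isPGroup.index N
  have hd1 : d ≤ 1 := by
    by_contra! hd2
    exact h.not_le_upperCentralSeries_of_isCyclic N
      (le_upperCentralSeries_of_card_le_pow h.isPGroup (h.card_le_of_index_eq_pow hd hd2))
  simpa [hd] using pow_dvd_pow p hd1

theorem repDegree_eq_one_iff (h : IsMaximalClass p k G) (V : FDRep ℂ G) [Simple V] :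
    repDegree V = 1 ↔ Subgroup.upperCentralSeries G (k + 1) ≤ repKer V := by
  refine ⟨fun hV ↦ ?_, fun hV ↦ repDegree_eq_one_of_forall_commute V fun a b ↦ ?_⟩
  · have := h.finite
    have : IsCyclic (G ⧸ repKer V) := isCyclic_quotient_ker_asGroupHom V.ρ hV
    refine (h.eq_upperCentralSeries_or_le (repKer V)).resolve_left ?_
    rintro ⟨i, hi, hker⟩
    exact h.not_le_upperCentralSeries_of_isCyclic (repKer V)
      (hker.trans_le (Subgroup.upperCentralSeries_mono G (by lia)))
  · have ha : a ∈ Subgroup.upperCentralSeries G (k + 2) :=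
      h.upperCentralSeries_eq_top ▸ Subgroup.mem_top a
    have hab := mem_repKer.1 (hV (Subgroup.mem_upperCentralSeries_succ_iff.1 ha b))
    have hmul : a * b = ⁅a, b⁆ * (b * a) := by simp [commutatorElement_def]
    rw [commute_iff_eq, ← map_mul, ← map_mul, hmul, map_mul, hab, one_mul]

theorem exists_repKer_eq_of_repDegree_ne_one (h : IsMaximalClass p k G) (V : FDRep ℂ G) [Simple V]
    (hV : repDegree V ≠ 1) : ∃ i ≤ k, repKer V = Subgroup.upperCentralSeries G i :=
  (h.eq_upperCentralSeries_or_le (repKer V)).resolve_right (mt (h.repDegree_eq_one_iff V).2 hV)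

theorem codegree_dvd_of_repDegree_eq_one (h : IsMaximalClass p k G) (V : FDRep ℂ G)
    (hV : repDegree V = 1) : codegree V ∣ p := by
  have := h.finite
  have : IsCyclic (G ⧸ repKer V) := isCyclic_quotient_ker_asGroupHom V.ρ hV
  rw [codegree, hV, Nat.div_one]
  exact h.index_dvd_of_isCyclic (repKer V)

theorem prime_mem_codSet (h : IsMaximalClass p k G) : p ∈ codSet G := by
  have := h.finite
  obtain ⟨g, hg⟩ : ∃ g, g ∉ Subgroup.upperCentralSeries G (k + 1) := by
    simpa [Subgroup.eq_top_iff'] using h.upperCentralSeries_ne_top le_rfl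
  obtain ⟨V, hV, hle, hgV⟩ := exists_simple_le_repKer _ hg
  have hdeg := (h.repDegree_eq_one_iff V).2 hle
  have hcod : codegree V ≠ 1 := by
    rw [codegree, hdeg, Nat.div_one, Ne, Subgroup.index_eq_one]
    exact fun htop ↦ hgV (htop ▸ Subgroup.mem_top g)
  exact ⟨V, hV, (hp.out.eq_one_or_self_of_dvd _
    (h.codegree_dvd_of_repDegree_eq_one V hdeg)).resolve_left hcod⟩

theorem not_upperCentralSeries_le_of_lt (h : IsMaximalClass p k G) {i j : ℕ} (hij : i < j)
    (hj : j ≤ k + 1) :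
    ¬ Subgroup.upperCentralSeries G j ≤ Subgroup.upperCentralSeries G i := fun hle ↦ by
  have := h.finite
  have hcard := Subgroup.card_le_of_le hle
  rw [h.card_upperCentralSeries hj, h.card_upperCentralSeries (by lia)] at hcard
  exact hcard.not_gt (Nat.pow_lt_pow_right hp.out.one_lt hij)

theorem exists_simple_repKer_eq (h : IsMaximalClass p k G) {i : ℕ} (hi : i ≤ k) :
    ∃ V : FDRep ℂ G, Simple V ∧ repKer V = Subgroup.upperCentralSeries G i := by
  have := h.finite
  obtain ⟨g, hg, hgi⟩ := SetLike.not_le_iff_exists.1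
    (h.not_upperCentralSeries_le_of_lt i.lt_succ_self (by lia))
  obtain ⟨V, hV, hle, hgV⟩ := exists_simple_le_repKer _ hgi
  have hnot : ∀ j > i, ¬ Subgroup.upperCentralSeries G j ≤ repKer V := fun j hj hle ↦
    hgV (hle (Subgroup.upperCentralSeries_mono G hj hg))
  obtain ⟨j, -, hker⟩ :=
    (h.eq_upperCentralSeries_or_le (repKer V)).resolve_right (hnot _ (by lia))
  have hji : j ≤ i := not_lt.1 fun hlt ↦ hnot j hlt hker.ge
  exact ⟨V, hV, (hker.trans_le (Subgroup.upperCentralSeries_mono G hji)).antisymm hle⟩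

theorem index_upperCentralSeries (h : IsMaximalClass p k G) {i : ℕ} (hi : i ≤ k + 1) :
    (Subgroup.upperCentralSeries G i).index = p ^ (k + 3 - i) := by
  refine Nat.eq_of_mul_eq_mul_left (pow_pos hp.out.pos i) ?_
  rw [← h.card_upperCentralSeries hi, Subgroup.card_mul_index, h.card_eq,
    h.card_upperCentralSeries hi, ← pow_add]
  congr 1
  lia

theorem codegree_eq (h : IsMaximalClass p k G) {V : FDRep ℂ G} [Simple V] {i d : ℕ} (hi : i ≤ k)
    (hker : repKer V = Subgroup.upperCentralSeries G i) (hdeg : repDegree V = p ^ d) :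
    codegree V = p ^ (k + 3 - i - d) := by
  have := h.finite
  have hindex := h.index_upperCentralSeries (i := i) (by lia)
  have hle := repDegree_le_index_repKer V
  rw [hker, hdeg, hindex, Nat.pow_le_pow_iff_right hp.out.one_lt] at hle
  rw [codegree, hker, hdeg, hindex, Nat.pow_div hle hp.out.pos]

theorem codSet_eq (h : IsMaximalClass p k G) (d : ℕ → ℕ)
    (hd : ∀ V : FDRep ℂ G, Simple V → ∀ i ≤ k,
      repKer V = Subgroup.upperCentralSeries G i → repDegree V = p ^ d i) :
    codSet G = {m | ∃ e, (e ≤ 1 ∨ ∃ i ≤ k, e = k + 3 - i - d i) ∧ m = p ^ e} := by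
  have := h.finite
  ext m
  constructor
  · rintro ⟨V, hV, rfl⟩
    by_cases hV1 : repDegree V = 1
    · obtain hcod | hcod := hp.out.eq_one_or_self_of_dvd _
        (h.codegree_dvd_of_repDegree_eq_one V hV1)
      · exact ⟨0, .inl zero_le_one, by rw [hcod, pow_zero]⟩
      · exact ⟨1, .inl le_rfl, by rw [hcod, pow_one]⟩
    · obtain ⟨i, hi, hker⟩ := h.exists_repKer_eq_of_repDegree_ne_one V hV1
      exact ⟨_, .inr ⟨i, hi, rfl⟩, h.codegree_eq hi hker (hd V hV i hi hker)⟩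
  · rintro ⟨e, he | ⟨i, hi, rfl⟩, rfl⟩
    · obtain rfl | rfl := Nat.le_one_iff_eq_zero_or_eq_one.1 he
      · simpa using one_mem_codSet
      · simpa using h.prime_mem_codSet
    · obtain ⟨V, hV, hker⟩ := h.exists_simple_repKer_eq hi
      exact ⟨V, hV, h.codegree_eq hi hker (hd V hV i hi hker)⟩

theorem exists_simple_repKer_eq_of_mem_cdSet (h : IsMaximalClass p k G) {q : ℕ}
    (hq : q ∈ cdSet G) (hq1 : q ≠ 1) : ∃ i ≤ k, ∃ V : FDRep ℂ G, Simple V ∧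
      repKer V = Subgroup.upperCentralSeries G i ∧ repDegree V = q := by
  obtain ⟨V, hV, rfl⟩ := hq
  obtain ⟨i, hi, hker⟩ := h.exists_repKer_eq_of_repDegree_ne_one V hq1
  exact ⟨i, hi, V, hV, hker, rfl⟩

theorem exists_repDegree_eq_pow_ite (h : IsMaximalClass p k G) {b : ℕ} (hb : 2 ≤ b)
    (hcd : cdSet G = {1, p, p ^ b}) :
    ∃ a, 1 ≤ a ∧ a ≤ k ∧ ∀ V : FDRep ℂ G, Simple V → ∀ i ≤ k,
      repKer V = Subgroup.upperCentralSeries G i →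
        repDegree V = p ^ (if i < a then b else 1) := by
  classical
  have := h.finite
  have := h.isPGroup.isNilpotent
  have hpb : p < p ^ b := by simpa using Nat.pow_lt_pow_right hp.out.one_lt hb
  have hex := h.exists_simple_repKer_eq_of_mem_cdSet (q := p) (by simp [hcd]) hp.out.ne_one
  obtain ⟨j, -, W, hW, hkerW, hdegW⟩ := h.exists_simple_repKer_eq_of_mem_cdSet
    (q := p ^ b) (by simp [hcd]) (hp.out.one_lt.trans hpb).ne'
  obtain ⟨hak, U, hU, hkerU, hdegU⟩ := Nat.find_spec hex
  have hle : ∀ V : FDRep ℂ G, Simple V → ∀ i ≥ Nat.find hex,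
      repKer V = Subgroup.upperCentralSeries G i → repDegree V ≤ p := fun V hV i hi hker ↦
    repDegree_le_of_repKer_le hp.out hdegU
      (hkerU ▸ hker ▸ Subgroup.upperCentralSeries_mono G hi)
  refine ⟨Nat.find hex, ?_, hak, fun V hV i hi hker ↦ ?_⟩
  · by_contra! hlt
    exact hpb.not_ge (hdegW ▸ hle W hW j (by lia) hkerW)
  have hmem : repDegree V ∈ cdSet G := ⟨V, hV, rfl⟩
  have hne : repDegree V ≠ 1 := fun hV1 ↦
    h.not_upperCentralSeries_le_of_lt (Nat.lt_succ_of_le hi) le_rfl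
      (hker ▸ (h.repDegree_eq_one_iff V).1 hV1)
  rw [hcd] at hmem
  obtain hdeg | hdeg := hmem.resolve_left hne
  · have hai : Nat.find hex ≤ i := Nat.find_min' hex ⟨hi, V, hV, hker, hdeg⟩
    rw [if_neg hai.not_gt, pow_one, hdeg]
  · have hia : i < Nat.find hex := lt_of_not_ge fun hge ↦
      hpb.not_ge (hdeg ▸ hle V hV i hge hker)
    rw [if_pos hia, hdeg]

end IsMaximalClass

theorem exists_eq_add_three_and_isMaximalClass {p n : ℕ} [hp : Fact p.Prime] {G : Type} [Group G]
    (hcard : Nat.card G = p ^ n) (hmax : nilClass G = n - 1) {V : FDRep ℂ G} [Simple V]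
    (hV : repDegree V ≠ 1) : ∃ k, n = k + 3 ∧ IsMaximalClass p k G := by
  have : Finite G := Nat.finite_of_card_ne_zero (hcard ▸ pow_ne_zero n hp.out.ne_zero)
  have := (IsPGroup.of_card hcard).isNilpotent
  rw [nilClass_eq_nilpotencyClass] at hmax
  have hn : ¬ n - 1 ≤ 1 := fun hn ↦ hV <| by
    have := Group.IsNilpotent.nilpotencyClass_le_one_iff.1 (hmax.trans_le hn)
    refine repDegree_eq_one_of_forall_commute V fun a b ↦ ?_
    rw [commute_iff_eq, ← map_mul, ← map_mul, mul_comm']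
  exact ⟨n - 3, by lia, by rw [hcard]; congr 1; lia, by lia⟩

theorem le_one_or_exists_eq_sub_ite_iff {k a b e : ℕ} (hak : a ≤ k) (hb : 1 ≤ b) :
    (e ≤ 1 ∨ ∃ i ≤ k, e = k + 3 - i - (if i < a then b else 1)) ↔
      e ≤ max (k + 2 - a) (k + 3 - b) := by
  constructor
  · rintro (he | ⟨i, -, rfl⟩)
    · lia
    · split_ifs <;> lia
  · intro he
    by_cases he1 : e ≤ 1
    · exact .inl he1
    by_cases hea : e ≤ k + 2 - a
    · exact .inr ⟨k + 2 - e, by lia, by rw [if_neg] <;> lia⟩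
    · exact .inr ⟨k + 3 - b - e, by lia, by rw [if_pos] <;> lia⟩

/-- Theorem B: a maximal class `p`-group of order `p^n` with `cd(G) = {1, p, p^b}` has
`cod(G) = {p^i | 0 ≤ i ≤ c}` for some `n - b ≤ c ≤ n - 2`. -/
theorem maximal_class_three_degrees (p n b : ℕ) (hp : p.Prime) (G : Type) [Group G] [Fintype G]
    (hcard : Fintype.card G = p ^ n) (hb : 2 ≤ b) (hmax : nilClass G = n - 1)
    (hcd : cdSet G = {1, p, p ^ b}) :
    ∃ c : ℕ, n - b ≤ c ∧ c ≤ n - 2 ∧ codSet G = {m | ∃ i ≤ c, m = p ^ i} := by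
  have : Fact p.Prime := ⟨hp⟩
  obtain ⟨V, hV, hdeg⟩ : p ∈ cdSet G := by simp [hcd]
  obtain ⟨k, rfl, h⟩ := exists_eq_add_three_and_isMaximalClass
    (Nat.card_eq_fintype_card.trans hcard) hmax (V := V) (hdeg ▸ hp.ne_one)
  obtain ⟨a, ha, hak, hd⟩ := h.exists_repDegree_eq_pow_ite hb hcd
  refine ⟨max (k + 2 - a) (k + 3 - b), by lia, by lia, ?_⟩
  rw [h.codSet_eq _ hd]
  simp only [le_one_or_exists_eq_sub_ite_iff hak (one_le_two.trans hb)]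
end

section
/- Let p be a prime. If a finite p-group G has a faithful irreducible complex character of degree p, then G has a normal abelian subgroup of index p and cd(G) = {1, p}. -/
open CategoryTheory

/-! Let `x` represent a nontrivial central element of `G ⧸ Z(G)`. By Schur's lemma `⁅x, g⁆` acts on
the faithful irreducible representation `V` of degree `p` as a scalar `ζ g`, where `ζ` is a linear
character of `G` with kernel the centralizer of `x`. Determinants give `ζ ^ p = 1`, so the
centralizer is normal of index `p`. Conjugating by `g` shows that the eigenvalues of `x` are stable
under multiplication by all `ζ g`; hence `x` has `p` distinct eigenvalues on `V`, all operators
commuting with it are simultaneously diagonal, and the centralizer is abelian by faithfulness.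

For the degrees, let `A` be an abelian normal subgroup of prime index `p` and let `μ` be a weight of
`A` in an irreducible representation `W`. Conjugation permutes the weights, and the stabilizer of
`μ` is `A` or `G`. If it is `A`, there are `p` conjugate weights, while the translates of one weight
vector by coset representatives span `W`, so the degree is `p`. If it is `G`, then `A` acts by
scalars, hence so does `G`, and the degree is `1`. -/

open Module
open scoped commutatorElement
universe u v

section JointEigenspace

variable {k V ι : Type*} [Field k] [AddCommGroup V] [Module k V]

/-- The joint eigenspace of a family `f` of endomorphisms for the system of eigenvalues `μ`. For the
family of all `ρ a` with `a` in a subgroup `A`, this is the weight space of `A` of weight `μ`. -/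
def jointEigenspace (f : ι → End k V) (μ : ι → k) : Submodule k V :=
  ⨅ i, (f i).eigenspace (μ i)

variable {f : ι → End k V}

theorem mem_jointEigenspace_iff {μ : ι → k} {v : V} :
    v ∈ jointEigenspace f μ ↔ ∀ i, f i v = μ i • v := by
  simp only [jointEigenspace, Submodule.mem_iInf, End.mem_eigenspace_iff]

theorem iSupIndep_jointEigenspace (hf : ∀ i j, Commute (f i) (f j)) :
    iSupIndep (jointEigenspace f) :=
  (End.independent_iInf_maxGenEigenspace_of_forall_mapsTo f fun i j ↦
    End.mapsTo_maxGenEigenspace_of_comm (hf j i)).mono fun _ ↦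
      iInf_mono fun _ ↦ End.genEigenspace_le_maximal _ _ 1

-- A simple submodule over the commutative algebra generated by the family is a joint eigenline.
theorem exists_jointEigenspace_ne_bot [IsAlgClosed k] [FiniteDimensional k V] [Nontrivial V]
    (hf : ∀ i j, Commute (f i) (f j)) : ∃ μ, jointEigenspace f μ ≠ ⊥ := by
  let A := Algebra.adjoin k (Set.range f)
  have : IsMulCommutative A := Algebra.isMulCommutative_adjoin k <| by
    rintro _ ⟨i, rfl⟩ _ ⟨j, rfl⟩
    exact hf i j
  have : IsArtinian A V := isArtinian_of_tower k inferInstance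
  have : IsAtomic (Submodule A V) := isAtomic_of_orderBot_wellFounded_lt wellFounded_lt
  obtain ⟨N, hN⟩ := IsAtomic.exists_atom (Submodule A V)
  have := isSimpleModule_iff_isAtom.2 hN
  have : FiniteDimensional k N := inferInstanceAs (FiniteDimensional k (N.restrictScalars k))
  have hN_one : finrank k (N.restrictScalars k) = 1 :=
    IsSimpleModule.finrank_eq_one_of_isMulCommutative A N k
  obtain ⟨v, hv, hspan⟩ := finrank_eq_one_iff'.1 hN_one
  have hN_apply (i : ι) : f i v ∈ N := N.smul_mem ⟨f i, Algebra.subset_adjoin ⟨i, rfl⟩⟩ v.2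
  choose μ hμ using fun i ↦ hspan ⟨f i v, hN_apply i⟩
  exact ⟨μ, (Submodule.ne_bot_iff _).2 ⟨v, mem_jointEigenspace_iff.2 fun i ↦
    (congrArg Subtype.val (hμ i)).symm, by simpa using hv⟩⟩

end JointEigenspace

section DistinctEigenvalues

variable {k V ι : Type*} [Field k] [AddCommGroup V] [Module k V]

theorem eq_repr_smul_of_apply_eq_smul {X : End k V} (b : Basis ι k V) {μ : ι → k}
    (hμ : Function.Injective μ) (hb : ∀ i, X (b i) = μ i • b i) {i : ι} {w : V}
    (hw : X w = μ i • w) : w = b.repr w i • b i := by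
  have hcoord (j : ι) : b.repr (X w) j = μ j * b.repr w j := by
    have : (b.coord j) ∘ₗ X = μ j • b.coord j := b.ext fun l ↦ by
      obtain rfl | hlj := eq_or_ne l j <;> simp_all
    exact LinearMap.congr_fun this w
  refine b.ext_elem fun j ↦ ?_
  obtain rfl | hij := eq_or_ne i j
  · simp
  · have hzero : (μ i - μ j) * b.repr w j = 0 := by
      rw [sub_mul, ← hcoord, hw, map_smul, Finsupp.smul_apply, smul_eq_mul, sub_self]
    simpa [hij] using (mul_eq_zero.1 hzero).resolve_left (sub_ne_zero.2 (hμ.ne hij))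

theorem commute_of_commute_of_hasEigenvalue [Fintype ι] [FiniteDimensional k V] {X S T : End k V}
    {μ : ι → k} (hμ : Function.Injective μ) (hX : ∀ i, X.HasEigenvalue (μ i))
    (hcard : Fintype.card ι = finrank k V) (hS : Commute X S) (hT : Commute X T) :
    Commute S T := by
  choose v hv using fun i ↦ (hX i).exists_hasEigenvector
  have hli : LinearIndependent k v := End.eigenvectors_linearIndependent' X μ hμ v hv
  let b : Basis ι k V := .mk hli (hli.span_eq_top_of_card_eq_finrank' hcard).ge
  have hb (i : ι) : X (b i) = μ i • b i := by
    simpa only [b, Basis.mk_apply] using (hv i).apply_eq_smul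
  have apply_eq_smul {R : End k V} (hR : Commute X R) (i : ι) : ∃ c : k, R (b i) = c • b i := by
    refine ⟨_, eq_repr_smul_of_apply_eq_smul b hμ hb ?_⟩
    rw [← Module.End.mul_apply, hR.eq, Module.End.mul_apply, hb, map_smul]
  refine b.ext fun i ↦ ?_
  obtain ⟨c, hc⟩ := apply_eq_smul hS i
  obtain ⟨d, hd⟩ := apply_eq_smul hT i
  simp only [Module.End.mul_apply, hc, hd, map_smul, smul_comm c d]

end DistinctEigenvalues

section Irreducible

variable {k G V : Type*} [Field k] [Group G] [AddCommGroup V] [Module k V]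

theorem nontrivial_of_isIrreducible_s4 (ρ : Representation k G V) [ρ.IsIrreducible] : Nontrivial V :=
  IsSimpleModule.nontrivial (MonoidAlgebra k G) ρ.asModule

variable {ρ : Representation k G V} [ρ.IsIrreducible]

theorem eq_bot_or_eq_top_of_forall_apply_mem {N : Submodule k V}
    (hN : ∀ g, ∀ v ∈ N, ρ g v ∈ N) : N = ⊥ ∨ N = ⊤ :=
  (eq_bot_or_eq_top (⟨N, hN⟩ : Subrepresentation ρ)).imp
    (congrArg Subrepresentation.toSubmodule) (congrArg Subrepresentation.toSubmodule)

theorem span_range_apply_eq_top {v : V} (hv : v ≠ 0) :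
    Submodule.span k (Set.range fun g ↦ ρ g v) = ⊤ := by
  have hv_mem : v ∈ Submodule.span k (Set.range fun g ↦ ρ g v) :=
    Submodule.subset_span ⟨1, by simp⟩
  refine (eq_bot_or_eq_top_of_forall_apply_mem (ρ := ρ) fun g w hw ↦ ?_).resolve_left
    ((Submodule.ne_bot_iff _).2 ⟨v, hv_mem, hv⟩)
  induction hw using Submodule.span_induction with
  | mem _ h =>
    obtain ⟨h, rfl⟩ := h
    exact Submodule.subset_span ⟨g * h, by simp⟩
  | zero => simp
  | add _ _ _ _ hx hy => simpa using add_mem hx hy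
  | smul c _ _ hx => simpa using Submodule.smul_mem _ c hx

theorem finrank_le_index_of_apply_eq_smul {S : Subgroup G} [S.FiniteIndex] {v : V} (hv : v ≠ 0)
    (hS : ∀ s ∈ S, ∃ c : k, ρ s v = c • v) : finrank k V ≤ S.index := by
  let u (q : G ⧸ S) : V := ρ q.out v
  have hu : Submodule.span k (Set.range u) = ⊤ := by
    rw [eq_top_iff, ← span_range_apply_eq_top (ρ := ρ) hv, Submodule.span_le]
    rintro _ ⟨g, rfl⟩
    obtain ⟨s, hs⟩ := QuotientGroup.mk_out_eq_mul S g
    obtain ⟨c, hc⟩ := hS s⁻¹ (inv_mem s.2)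
    have hg : ρ g v = c • u g := by
      rw [← map_smul, ← hc, hs, ← Module.End.mul_apply, ← map_mul, mul_inv_cancel_right]
    exact Set.mem_of_eq_of_mem hg (Submodule.smul_mem _ c (Submodule.subset_span ⟨g, rfl⟩))
  have := S.fintypeQuotientOfFiniteIndex
  calc finrank k V = (Set.range u).finrank k := by rw [Set.finrank, hu, finrank_top]
    _ ≤ Fintype.card (G ⧸ S) := finrank_range_le_card u
    _ = S.index := by rw [Subgroup.index, Nat.card_eq_fintype_card]

variable [IsAlgClosed k] [FiniteDimensional k V]

theorem exists_eq_smul_one_of_commute {T : End k V} (hT : ∀ g, Commute T (ρ g)) :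
    ∃ c : k, T = c • 1 := by
  have := nontrivial_of_isIrreducible_s4 ρ
  obtain ⟨c, hc⟩ := T.exists_eigenvalue
  have htop : T.eigenspace c = ⊤ :=
    (eq_bot_or_eq_top_of_forall_apply_mem (ρ := ρ) fun g _ hv ↦
      End.mapsTo_genEigenspace_of_comm (hT g) c 1 hv).resolve_left hc
  exact ⟨c, LinearMap.ext fun v ↦ End.mem_eigenspace_iff.1 (htop ▸ Submodule.mem_top)⟩

variable (ρ) in
theorem exists_centralCharacter :
    ∃ ω : Subgroup.center G →* kˣ, ∀ z : Subgroup.center G, ρ z = (ω z : k) • 1 := by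
  have := nontrivial_of_isIrreducible_s4 ρ
  choose c hc using fun z : Subgroup.center G ↦ exists_eq_smul_one_of_commute (ρ := ρ)
    fun g ↦ (show Commute (z : G) g from (Subgroup.mem_center_iff.1 z.2 g).symm).map ρ
  have hinj := smul_left_injective k (one_ne_zero : (1 : End k V) ≠ 0)
  let ω : Subgroup.center G →* k :=
    { toFun := c
      map_one' := hinj <| by simp only [← hc, Subgroup.coe_one, map_one, one_smul]
      map_mul' := fun y z ↦ hinj <| by
        simp only [← hc, Subgroup.coe_mul, map_mul, mul_smul]
        rw [hc y, smul_one_mul] }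
  exact ⟨ω.toHomUnits, hc⟩

end Irreducible

theorem commute_apply_of_isMulCommutative {k G V : Type*} [CommSemiring k] [Group G]
    [AddCommMonoid V] [Module k V] (ρ : Representation k G V) {A : Subgroup G} [IsMulCommutative A]
    (a b : A) : Commute (ρ a) (ρ b) :=
  (show Commute (a : G) b from congrArg Subtype.val (mul_comm' a b)).map ρ

section Weights

variable {k G V : Type*} [Group G] {A : Subgroup G} [A.Normal]

variable (k A) in
/-- The action of `G` on the functions on a normal subgroup `A` induced by conjugation,
`(g • μ) a = μ (g⁻¹ * a * g)`. It permutes the weights of `A` in a representation of `G`. -/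
abbrev conjWeightAction : MulAction G (A → k) :=
  letI : MulAction (MulAut A) (A → k) := arrowAction
  MulAction.compHom (A → k) (MulAut.conjNormal (H := A))

attribute [local instance] conjWeightAction

theorem conjWeightAction_smul_apply (g : G) (μ : A → k) (a : A) :
    (g • μ) a = μ (MulAut.conjNormal g⁻¹ a) := by
  rw [map_inv]
  rfl

theorem le_stabilizer_conjWeightAction [IsMulCommutative A] (μ : A → k) :
    A ≤ MulAction.stabilizer G μ := by
  refine fun b hb ↦ funext fun a ↦ ?_
  rw [conjWeightAction_smul_apply]
  congr 1
  ext
  have hba : b * a = a * b := congrArg Subtype.val (mul_comm' (⟨b, hb⟩ : A) a)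
  rw [MulAut.conjNormal_apply, inv_inv, mul_assoc, ← hba, inv_mul_cancel_left]

variable [Field k] [AddCommGroup V] [Module k V] {ρ : Representation k G V}

theorem apply_mem_jointEigenspace_smul {μ : A → k} {v : V}
    (hv : v ∈ jointEigenspace (fun a : A ↦ ρ a) μ) (g : G) :
    ρ g v ∈ jointEigenspace (fun a : A ↦ ρ a) (g • μ) := by
  refine mem_jointEigenspace_iff.2 fun a ↦ ?_
  have hconj : (a : G) * g = g * MulAut.conjNormal g⁻¹ a := by
    rw [MulAut.conjNormal_apply, inv_inv, mul_assoc, mul_inv_cancel_left]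
  rw [conjWeightAction_smul_apply, ← map_smul, ← mem_jointEigenspace_iff.1 hv,
    ← Module.End.mul_apply, ← Module.End.mul_apply, ← map_mul, ← map_mul, hconj]

theorem index_stabilizer_le_finrank [IsMulCommutative A] [FiniteDimensional k V] {μ : A → k}
    (hμ : jointEigenspace (fun a : A ↦ ρ a) μ ≠ ⊥) :
    (MulAction.stabilizer G μ).index ≤ finrank k V := by
  have hind := iSupIndep_jointEigenspace (commute_apply_of_isMulCommutative ρ (A := A))
  have := hind.fintypeNeBotOfFiniteDimensional
  have horbit : MulAction.orbit G μ ⊆ {ν | jointEigenspace (fun a : A ↦ ρ a) ν ≠ ⊥} := by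
    rintro _ ⟨g, rfl⟩
    obtain ⟨v, hv, hv_ne⟩ := (Submodule.ne_bot_iff _).1 hμ
    exact (Submodule.ne_bot_iff _).2 ⟨ρ g v, apply_mem_jointEigenspace_smul hv g,
      (map_ne_zero_iff _ (ρ.apply_bijective g).injective).2 hv_ne⟩
  calc (MulAction.stabilizer G μ).index = Nat.card (MulAction.orbit G μ) :=
        MulAction.index_stabilizer G μ
    _ ≤ Nat.card {ν // jointEigenspace (fun a : A ↦ ρ a) ν ≠ ⊥} :=
        Nat.card_le_card_of_injective _ (Set.inclusion_injective horbit)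
    _ ≤ finrank k V := by
        rw [Nat.card_eq_fintype_card]
        exact hind.subtype_ne_bot_le_finrank

theorem jointEigenspace_eq_top_of_stabilizer_eq_top [ρ.IsIrreducible] {μ : A → k}
    (hμ : jointEigenspace (fun a : A ↦ ρ a) μ ≠ ⊥) (htop : MulAction.stabilizer G μ = ⊤) :
    jointEigenspace (fun a : A ↦ ρ a) μ = ⊤ := by
  refine (eq_bot_or_eq_top_of_forall_apply_mem (ρ := ρ) fun g v hv ↦ ?_).resolve_left hμ
  have hg : g • μ = μ := MulAction.mem_stabilizer_iff.1 (htop ▸ Subgroup.mem_top g)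
  exact hg ▸ apply_mem_jointEigenspace_smul hv g

end Weights

theorem eq_or_eq_top_of_le_of_index_prime {G : Type*} [Group G] {A S : Subgroup G} (h : A ≤ S)
    (hA : A.index.Prime) : S = A ∨ S = ⊤ := by
  have hmul := Subgroup.relIndex_mul_index h
  rcases hA.eq_one_or_self_of_dvd _ (Subgroup.index_dvd_of_le h) with hS | hS
  · exact .inr (Subgroup.index_eq_one.1 hS)
  · rw [hS, mul_eq_right₀ hA.ne_zero, Subgroup.relIndex_eq_one] at hmul
    exact .inl (hmul.antisymm h)

section DegreeOneOrIndex

variable {k G V : Type*} [Field k] [IsAlgClosed k] [Group G] [AddCommGroup V] [Module k V]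
  [FiniteDimensional k V] {ρ : Representation k G V} [ρ.IsIrreducible]
  {A : Subgroup G}

theorem exists_eq_smul_one_of_index_prime (hA : A.index.Prime)
    (hscalar : ∀ a ∈ A, ∃ c : k, ρ a = c • 1) (g : G) : ∃ c : k, ρ g = c • 1 := by
  let S : Subgroup G := (Subgroup.centralizer {ρ.asGroupHom g}).comap ρ.asGroupHom
  have mem_S {s : G} : s ∈ S ↔ Commute (ρ g) (ρ s) := by
    rw [Subgroup.mem_comap, Subgroup.mem_centralizer_singleton_iff, ← Units.val_inj]
    exact eq_comm
  have hAS : A ≤ S := fun a ha ↦ by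
    obtain ⟨c, hc⟩ := hscalar a ha
    rw [mem_S, hc]
    exact (Commute.one_right _).smul_right c
  rcases eq_or_eq_top_of_le_of_index_prime hAS hA with hS | hS
  · exact hscalar g (hS ▸ mem_S.2 (Commute.refl _))
  · exact exists_eq_smul_one_of_commute (ρ := ρ) fun h ↦ mem_S.1 (hS ▸ Subgroup.mem_top h)

theorem finrank_eq_one_or_eq_index (ρ : Representation k G V) [ρ.IsIrreducible] [A.Normal]
    [IsMulCommutative A] (hA : A.index.Prime) :
    finrank k V = 1 ∨ finrank k V = A.index := by
  have := nontrivial_of_isIrreducible_s4 ρ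
  have : A.FiniteIndex := ⟨hA.ne_zero⟩
  obtain ⟨μ, hμ⟩ := exists_jointEigenspace_ne_bot (commute_apply_of_isMulCommutative ρ (A := A))
  obtain ⟨v, hv, hv_ne⟩ := (Submodule.ne_bot_iff _).1 hμ
  have hindex := index_stabilizer_le_finrank hμ
  rcases eq_or_eq_top_of_le_of_index_prime (le_stabilizer_conjWeightAction μ) hA with hS | hS
  · rw [hS] at hindex
    exact .inr ((finrank_le_index_of_apply_eq_smul (ρ := ρ) hv_ne fun a ha ↦
      ⟨_, mem_jointEigenspace_iff.1 hv ⟨a, ha⟩⟩).antisymm hindex)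
  · have htop := jointEigenspace_eq_top_of_stabilizer_eq_top hμ hS
    have hscalar := exists_eq_smul_one_of_index_prime (ρ := ρ) hA fun a ha ↦
      ⟨μ ⟨a, ha⟩, LinearMap.ext fun w ↦
        mem_jointEigenspace_iff.1 (htop ▸ Submodule.mem_top : w ∈ _) ⟨a, ha⟩⟩
    refine .inl (le_antisymm ?_ Module.finrank_pos)
    rw [← Subgroup.index_top (G := G)]
    refine finrank_le_index_of_apply_eq_smul (ρ := ρ) hv_ne fun g _ ↦ ?_
    exact (hscalar g).imp fun c hc ↦ LinearMap.congr_fun hc v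

end DegreeOneOrIndex

section SecondCenter

variable {G : Type*} [Group G]

theorem exists_notMem_center_forall_commutatorElement_mem_center [Group.IsNilpotent G]
    (hG : Subgroup.center G ≠ ⊤) :
    ∃ x ∉ Subgroup.center G, ∀ g, ⁅x, g⁆ ∈ Subgroup.center G := by
  by_contra! h
  refine hG ?_
  rw [← Subgroup.upperCentralSeries_one]
  refine Subgroup.upperCentralSeries.eq_top (Nat.lt_add_one 1).ne
    ((Subgroup.upperCentralSeries_mono G (Nat.le_add_right 1 1)).antisymm fun x hx ↦ ?_)
  rw [Subgroup.mem_upperCentralSeries_succ_iff, Subgroup.upperCentralSeries_one] at hx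
  rw [Subgroup.upperCentralSeries_one]
  by_contra hx_notMem
  obtain ⟨g, hg⟩ := h x hx_notMem
  exact hg (hx g)

theorem exists_monoidHom_center_eq_commutatorElement {x : G}
    (hx : ∀ g, ⁅x, g⁆ ∈ Subgroup.center G) :
    ∃ φ : G →* Subgroup.center G, ∀ g, (φ g : G) = ⁅x, g⁆ := by
  refine ⟨MonoidHom.mk' (fun g ↦ ⟨⁅x, g⁆, hx g⟩) fun g h ↦ Subtype.ext ?_, fun _ ↦ rfl⟩
  change ⁅x, g * h⁆ = ⁅x, g⁆ * ⁅x, h⁆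
  rw [commutatorElement_mul_right_eq_mul_conj, mul_assoc _ g, Subgroup.mem_center_iff.1 (hx h) g,
    ← mul_assoc, mul_inv_cancel_right]

theorem index_ker_eq_of_pow_eq_one {R : Type*} [CommRing R] [IsDomain R] {p : ℕ} (hp : p.Prime)
    {f : G →* Rˣ} (hf : ∀ g, f g ^ p = 1) (hf_ne : f ≠ 1) : f.ker.index = p := by
  have := Fact.mk hp
  obtain ⟨g, hg⟩ := DFunLike.ne_iff.1 hf_ne
  have horder : orderOf (f g) = p := orderOf_eq_prime (hf g) hg
  have hprim : IsPrimitiveRoot (f g) p := horder ▸ IsPrimitiveRoot.orderOf (f g)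
  have hrange : f.range = Subgroup.zpowers (f g) := by
    refine le_antisymm ?_ (Subgroup.zpowers_le.2 ⟨g, rfl⟩)
    rintro _ ⟨h, rfl⟩
    rw [hprim.zpowers_eq]
    exact (mem_rootsOfUnity p _).2 (hf h)
  rw [Subgroup.index_ker, hrange, Nat.card_zpowers, horder]

end SecondCenter

section CommutatorCharacter

variable {k G V : Type*} [Field k] [Group G] [AddCommGroup V] [Module k V]
  {ρ : Representation k G V} {x : G} {ζ : G →* kˣ}

theorem exists_commutatorCharacter [IsAlgClosed k] [FiniteDimensional k V] [ρ.IsIrreducible]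
    (hx : ∀ g, ⁅x, g⁆ ∈ Subgroup.center G) : ∃ ζ : G →* kˣ, ∀ g, ρ ⁅x, g⁆ = (ζ g : k) • 1 := by
  obtain ⟨ω, hω⟩ := exists_centralCharacter ρ
  obtain ⟨φ, hφ⟩ := exists_monoidHom_center_eq_commutatorElement hx
  exact ⟨ω.comp φ, fun g ↦ hφ g ▸ hω (φ g)⟩

theorem ker_commutatorCharacter_eq_centralizer [Nontrivial V] (hρ : Function.Injective ρ)
    (hζ : ∀ g, ρ ⁅x, g⁆ = (ζ g : k) • 1) : ζ.ker = Subgroup.centralizer {x} := by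
  ext g
  have hscalar : ρ ⁅x, g⁆ = 1 ↔ (ζ g : k) = 1 := by
    rw [hζ, ← (smul_left_injective k (one_ne_zero : (1 : End k V) ≠ 0)).eq_iff, one_smul]
  rw [MonoidHom.mem_ker, ← Units.val_eq_one, ← hscalar, hρ.eq_iff' (map_one ρ),
    commutatorElement_eq_one_iff_commute, Subgroup.mem_centralizer_singleton_iff]
  exact eq_comm

theorem commutatorCharacter_pow_finrank_eq_one (hζ : ∀ g, ρ ⁅x, g⁆ = (ζ g : k) • 1) (g : G) :
    ζ g ^ finrank k V = 1 := by
  have hdet : LinearMap.det (ρ ⁅x, g⁆) = 1 := by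
    let δ : G →* kˣ := (LinearMap.det.comp ρ).toHomUnits
    have hδ : δ ⁅x, g⁆ = 1 := (map_commutatorElement δ x g).trans
      (commutatorElement_eq_one_iff_commute.2 (Commute.all _ _))
    exact congrArg Units.val hδ
  rw [hζ, LinearMap.det_smul, map_one, mul_one] at hdet
  exact Units.ext (by simpa using hdet)

theorem hasEigenvalue_commutatorCharacter_mul (hζ : ∀ g, ρ ⁅x, g⁆ = (ζ g : k) • 1) {c : k}
    (hc : End.HasEigenvalue (ρ x) c) (g : G) : End.HasEigenvalue (ρ x) (ζ g * c) := by
  obtain ⟨v, hv⟩ := hc.exists_hasEigenvector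
  have hxg : x * g = ⁅x, g⁆ * (g * x) := by simp [commutatorElement_def, mul_assoc]
  refine End.hasEigenvalue_of_hasEigenvector (x := ρ g v)
    ⟨End.mem_eigenspace_iff.2 ?_, (map_ne_zero_iff _ (ρ.apply_bijective g).injective).2 hv.2⟩
  rw [← Module.End.mul_apply, ← map_mul, hxg, map_mul, map_mul, hζ, smul_one_mul,
    LinearMap.smul_apply, Module.End.mul_apply, hv.apply_eq_smul, map_smul, mul_smul]

theorem commute_of_mem_centralizer [IsAlgClosed k] [FiniteDimensional k V] [Nontrivial V]
    (hρ : Function.Injective ρ) (hζ : ∀ g, ρ ⁅x, g⁆ = (ζ g : k) • 1)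
    (hcard : Nat.card ζ.range = finrank k V) {a b : G}
    (ha : a ∈ Subgroup.centralizer {x}) (hb : b ∈ Subgroup.centralizer {x}) : Commute a b := by
  obtain ⟨c, hc⟩ := End.exists_eigenvalue (ρ x : End k V)
  have hc_ne : c ≠ 0 := by
    rintro rfl
    obtain ⟨v, hv⟩ := hc.exists_hasEigenvector
    exact (map_ne_zero_iff _ (ρ.apply_bijective x).injective).2 hv.2
      (by simpa only [zero_smul] using hv.apply_eq_smul)
  have : Finite ζ.range := Nat.finite_of_card_ne_zero (hcard ▸ finrank_pos.ne')
  have := Fintype.ofFinite ζ.range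
  have hinj : Function.Injective fun u : ζ.range ↦ ((u : kˣ) : k) * c := fun u w huw ↦
    Subtype.ext (Units.ext (mul_right_cancel₀ hc_ne huw))
  have hcomm {s : G} (hs : s ∈ Subgroup.centralizer {x}) : Commute (ρ x) (ρ s) :=
    (show Commute x s from (Subgroup.mem_centralizer_singleton_iff.1 hs).symm).map ρ
  refine hρ ?_
  rw [map_mul, map_mul]
  refine commute_of_commute_of_hasEigenvalue hinj ?_ (by rwa [← Nat.card_eq_fintype_card])
    (hcomm ha) (hcomm hb)
  rintro ⟨_, g, rfl⟩
  exact hasEigenvalue_commutatorCharacter_mul hζ hc g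

end CommutatorCharacter

theorem exists_normal_isMulCommutative_index_eq {k G V : Type*} [Field k] [IsAlgClosed k]
    [Group G] [Group.IsNilpotent G] [AddCommGroup V] [Module k V] [FiniteDimensional k V]
    (ρ : Representation k G V) [ρ.IsIrreducible] (hρ : Function.Injective ρ)
    (hdeg : (finrank k V).Prime) :
    ∃ A : Subgroup G, A.Normal ∧ IsMulCommutative A ∧ A.index = finrank k V := by
  have := nontrivial_of_isIrreducible_s4 ρ
  have hcenter : Subgroup.center G ≠ ⊤ := fun h ↦ by
    have := Subgroup.center_eq_top_iff.1 h
    exact hdeg.ne_one (Representation.IsIrreducible.finrank_eq_one_of_isMulCommutative ρ)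
  obtain ⟨x, hx_notMem, hx⟩ := exists_notMem_center_forall_commutatorElement_mem_center hcenter
  obtain ⟨ζ, hζ⟩ := exists_commutatorCharacter (ρ := ρ) hx
  have hker := ker_commutatorCharacter_eq_centralizer hρ hζ
  have hζ_ne : ζ ≠ 1 := by
    rintro rfl
    refine hx_notMem (Subgroup.mem_center_iff.2 fun g ↦ ?_)
    exact Subgroup.mem_centralizer_singleton_iff.1 (hker ▸ MonoidHom.mem_ker.2 rfl)
  have hindex := index_ker_eq_of_pow_eq_one hdeg (commutatorCharacter_pow_finrank_eq_one hζ) hζ_ne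
  have hcard : Nat.card ζ.range = finrank k V := by rw [← Subgroup.index_ker, hindex]
  rw [hker] at hindex
  refine ⟨Subgroup.centralizer {x}, hker ▸ ζ.normal_ker, ⟨⟨fun a b ↦ Subtype.ext ?_⟩⟩, hindex⟩
  exact commute_of_mem_centralizer hρ hζ hcard a.2 b.2

section FDRep

variable {k : Type u} {G : Type v} [Field k] [Group G]

theorem fdRep_mono_of_injective {V W : FDRep k G} (f : V ⟶ W)
    (hf : Function.Injective f.hom.hom.hom) : Mono f := by
  refine (Action.forget _ _).mono_of_mono_map
    ((forget₂ (FGModuleCat k) (ModuleCat k)).mono_of_mono_map ?_)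
  exact (ModuleCat.mono_iff_injective _).2 hf

theorem fdRep_simple_of_finrank_eq_one {V : FDRep k G} (hV : finrank k V = 1) : Simple V := by
  let F : FDRep k G ⥤ ModuleCat k := Action.forget _ _ ⋙ forget₂ (FGModuleCat k) (ModuleCat k)
  have : Simple (F.obj V) := simple_of_finrank_eq_one (k := k) hV
  exact F.simple_of_simple_obj V

theorem isIrreducible_of_simple_s4 (V : FDRep k G) [Simple V] :
    Representation.IsIrreducible V.ρ := by
  have hV : Nontrivial V := by
    rw [← not_subsingleton_iff_nontrivial]
    intro
    exact id_nonzero V (by ext1; ext1; ext1; exact Subsingleton.elim _ _)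
  have : Nontrivial (Subrepresentation V.ρ) :=
    ⟨⊥, ⊤, fun h ↦ bot_ne_top (congrArg Subrepresentation.toSubmodule h)⟩
  refine ⟨fun N ↦ ?_⟩
  let ι : FDRep.of N.toRepresentation ⟶ V :=
    ⟨InducedCategory.homMk (ModuleCat.ofHom N.toSubmodule.subtype), fun g ↦ by ext1; rfl⟩
  have : Mono ι := fdRep_mono_of_injective ι N.toSubmodule.injective_subtype
  by_cases hι : ι = 0
  · refine .inl (Subrepresentation.toSubmodule_injective
      ((Submodule.eq_bot_iff _).2 fun v hv ↦ ?_))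
    exact congrArg (fun f : FDRep.of N.toRepresentation ⟶ V ↦ f.hom.hom.hom ⟨v, hv⟩) hι
  · have := isIso_of_mono_of_nonzero hι
    refine .inr (Subrepresentation.toSubmodule_injective
      (Submodule.eq_top_iff'.2 fun v ↦ ?_))
    have hv : ι.hom.hom.hom ((inv ι).hom.hom.hom v) = v :=
      congrArg (fun f : V ⟶ V ↦ f.hom.hom.hom v) (IsIso.inv_hom_id ι)
    rw [← hv]
    exact Subtype.property _

end FDRep

theorem faithful_degree_p_general {k : Type u} {G : Type v} [Field k] [IsAlgClosed k] [Group G]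
    [Group.IsNilpotent G] {p : ℕ} (hp : p.Prime) (V : FDRep k G) [Simple V]
    (hV : Function.Injective V.ρ) (hdeg : finrank k V = p) :
    (∃ H : Subgroup G, H.Normal ∧ (∀ a b : H, a * b = b * a) ∧ H.index = p) ∧
      {m | ∃ W : FDRep k G, Simple W ∧ finrank k W = m} = {1, p} := by
  have := isIrreducible_of_simple_s4 V
  obtain ⟨A, hA_normal, hA_comm, hA_index⟩ :=
    exists_normal_isMulCommutative_index_eq V.ρ hV (hdeg ▸ hp)
  rw [hdeg] at hA_index
  refine ⟨⟨A, hA_normal, mul_comm', hA_index⟩, Set.Subset.antisymm ?_ ?_⟩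
  · rintro _ ⟨W, hW, rfl⟩
    have := isIrreducible_of_simple_s4 W
    exact hA_index ▸ finrank_eq_one_or_eq_index W.ρ (hA_index ▸ hp)
  · rintro _ (rfl | rfl)
    · exact ⟨FDRep.of (Representation.trivial k G k),
        fdRep_simple_of_finrank_eq_one (finrank_self k), finrank_self k⟩
    · exact ⟨V, inferInstance, hdeg⟩

/-- A finite `p`-group with a faithful irreducible character of degree `p` has a normal
abelian subgroup of index `p`, and `cd(G) = {1, p}`. -/
theorem faithful_degree_p (p : ℕ) (hp : p.Prime) (G : Type) [Group G] [Fintype G]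
    (hpG : IsPGroup p G) (V : FDRep ℂ G) (hV : Simple V) (hfaith : repKer V = ⊥)
    (hdeg : repDegree V = p) :
    (∃ H : Subgroup G, H.Normal ∧ (∀ a b : H, a * b = b * a) ∧ H.index = p) ∧
      cdSet G = {1, p} := by
  have := Fact.mk hp
  have := hpG.isNilpotent
  exact faithful_degree_p_general hp V
    (Units.val_injective.comp ((MonoidHom.ker_eq_bot_iff _).1 hfaith)) hdeg
end
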